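/- The class group of the quadratic field ℚ(√-39) is cyclic of order 4. -/

import Mathlib

open NumberField Polynomial

/-!
Let `𝓞` be the ring of integers of `ℚ(√-39)`; it is `ℤ[ω]` with `ω² = ω - 10`. Ideals of `𝓞` of
prime norm `p` are the kernels of the homomorphisms `𝓞 → ℤ/p`, that is, they correspond to the
roots of `X² - X + 10` modulo `p`: there are two for `p = 2` and one for `p = 3`. Since Minkowski's
bound is less than `4`, the class number is at most `1 + 2 + 1`.

Conversely, let `P ≠ Q` be the primes above `2`. An element with nonzero `ω`-coordinate has norm at
least `39 / 4`, so if `P ^ k` is principal with `4 * 2 ^ k < 39`, then its generator is a rational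
integer whose square is `2 ^ k`, hence is divisible by `2` and lies in `Q`; this is absurd as
`P ^ k ⊆ Q` forces `P = Q`. Hence the class of `P` has order at least `4`.
-/

section QuadraticAlgebra

open QuadraticAlgebra

section CommRing

variable {R : Type*} [CommRing R] {a b : R}

lemma quadraticAlgebra_basis_zero : basis a b 0 = 1 := by
  simp [basis, QuadraticAlgebra.ext_iff]

lemma quadraticAlgebra_basis_one : basis a b 1 = ω := by
  simp [basis, QuadraticAlgebra.ext_iff]

lemma algebraNorm_eq_quadraticAlgebra_norm (z : QuadraticAlgebra R a b) :
    Algebra.norm R z = z.norm := by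
  rw [Algebra.norm_apply]
  exact det_toLinearMap_eq_norm z

lemma algebraTrace_eq_quadraticAlgebra_trace (z : QuadraticAlgebra R a b) :
    Algebra.trace R (QuadraticAlgebra R a b) z = z.trace := by
  rw [Algebra.trace_eq_matrix_trace (basis a b), Matrix.trace_fin_two, trace_def]
  simp only [Algebra.leftMulMatrix_eq_repr_mul, quadraticAlgebra_basis_zero,
    quadraticAlgebra_basis_one, mul_one, basis_repr_apply, Matrix.cons_val_zero,
    Matrix.cons_val_one, Matrix.cons_val_fin_one, re_mul, im_mul, omega_re, omega_im, mul_zero,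
    zero_add, add_zero]
  ring

lemma discr_quadraticAlgebra_basis : Algebra.discr R (basis a b) = b ^ 2 + 4 * a := by
  rw [Algebra.discr_def, Matrix.det_fin_two]
  simp only [Algebra.traceMatrix_apply, Algebra.traceForm_apply, quadraticAlgebra_basis_zero,
    quadraticAlgebra_basis_one, algebraTrace_eq_quadraticAlgebra_trace, trace_def, re_one, im_one,
    re_mul, im_mul, omega_re, omega_im, mul_one, one_mul, mul_zero, zero_add, add_zero]
  ring

lemma four_mul_quadraticAlgebra_norm (z : QuadraticAlgebra R a b) :
    4 * z.norm = z.trace ^ 2 - (b ^ 2 + 4 * a) * z.im ^ 2 := by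
  rw [norm_def, trace_def]
  ring

end CommRing

lemma im_eq_zero_of_four_mul_norm_lt {a b : ℤ} {z : QuadraticAlgebra ℤ a b}
    (hd : b ^ 2 + 4 * a < 0) (hz : 4 * z.norm < -(b ^ 2 + 4 * a)) : z.im = 0 := by
  by_contra him
  have him' : 0 < z.im ^ 2 := by positivity
  nlinarith [four_mul_quadraticAlgebra_norm z, sq_nonneg z.trace]

section BaseChange

variable {R : Type*} (K : Type*) [CommRing R] [CommRing K] [Algebra R K] (a b : R)

/-- The base change map `R[ω] → K[ω]` between the quadratic algebras defined by the same relation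
`ω² = a + b ω`, used to compare `R[ω]` with the integral closure of `R` in `K[ω]`. -/
def quadraticAlgebraMap :
    QuadraticAlgebra R a b →ₐ[R] QuadraticAlgebra K (algebraMap R K a) (algebraMap R K b) :=
  lift ⟨ω, by simp [QuadraticAlgebra.ext_iff, Algebra.algebraMap_eq_smul_one]⟩

variable {a b}

lemma quadraticAlgebraMap_mk (x y : R) :
    quadraticAlgebraMap K a b ⟨x, y⟩ = ⟨algebraMap R K x, algebraMap R K y⟩ := by
  simp [quadraticAlgebraMap, QuadraticAlgebra.ext_iff, Algebra.algebraMap_eq_smul_one]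

lemma quadraticAlgebraMap_injective [FaithfulSMul R K] :
    Function.Injective (quadraticAlgebraMap K a b) := by
  rintro ⟨x, y⟩ ⟨x', y'⟩ h
  simpa only [quadraticAlgebraMap_mk, QuadraticAlgebra.ext_iff,
    (FaithfulSMul.algebraMap_injective R K).eq_iff] using h

variable {K} {w : QuadraticAlgebra K (algebraMap R K a) (algebraMap R K b)}

lemma isIntegral_star_quadraticAlgebra (hw : IsIntegral R w) : IsIntegral R (star w) :=
  hw.map_of_comp_eq (RingHom.id R) (starRingEnd _) <| by
    ext x <;> simp [Algebra.algebraMap_eq_smul_one, starRingEnd_apply]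

variable [IsIntegrallyClosed R] [IsFractionRing R K]

lemma isInteger_of_isIntegral_algebraMap_quadraticAlgebra {x : K} {a' b' : K}
    (hx : IsIntegral R (algebraMap K (QuadraticAlgebra K a' b') x)) :
    IsLocalization.IsInteger R x :=
  IsIntegrallyClosed.isIntegral_iff.1 ((isIntegral_algebraMap_iff algebraMap_injective).1 hx)

lemma isInteger_quadraticAlgebra_trace (hw : IsIntegral R w) :
    IsLocalization.IsInteger R w.trace := by
  apply isInteger_of_isIntegral_algebraMap_quadraticAlgebra
  rw [algebraMap_trace_eq_add_star]
  exact hw.add (isIntegral_star_quadraticAlgebra hw)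

lemma isInteger_quadraticAlgebra_norm (hw : IsIntegral R w) :
    IsLocalization.IsInteger R w.norm := by
  apply isInteger_of_isIntegral_algebraMap_quadraticAlgebra
  rw [algebraMap_norm_eq_mul_star]
  exact hw.mul (isIntegral_star_quadraticAlgebra hw)

end BaseChange

section IntegralClosure

variable {R K : Type*} [CommRing R] [IsDomain R] [UniqueFactorizationMonoid R] [Field K]
  [Algebra R K] [IsFractionRing R K]

lemma isInteger_of_squarefree_mul_sq {d : R} (hd : Squarefree d) {q : K}
    (h : IsLocalization.IsInteger R (algebraMap R K d * q ^ 2)) : IsLocalization.IsInteger R q := by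
  obtain ⟨r, hr⟩ := h
  have hden : algebraMap R K (IsFractionRing.den R q : R) ≠ 0 :=
    IsFractionRing.to_map_ne_zero_of_mem_nonZeroDivisors (IsFractionRing.den R q).2
  have heq : d * IsFractionRing.num R q ^ 2 = r * (IsFractionRing.den R q : R) ^ 2 := by
    apply IsFractionRing.injective R K
    rw [← IsFractionRing.mk'_num_den' R q] at hr
    simp only [map_mul, map_pow]
    field_simp at hr
    exact hr.symm
  have hdvd : (IsFractionRing.den R q : R) ^ 2 ∣ d :=
    (IsFractionRing.num_den_reduced R q).symm.pow.dvd_of_dvd_mul_right (Dvd.intro_left r heq.symm)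
  exact IsFractionRing.isInteger_of_isUnit_den (hd _ (sq (IsFractionRing.den R q : R) ▸ hdvd))

lemma range_quadraticAlgebraMap_eq_integralClosure {a b : R} (hd : Squarefree (b ^ 2 + 4 * a)) :
    (quadraticAlgebraMap K a b).range = integralClosure R _ := by
  have hrange (z : QuadraticAlgebra R a b) : IsIntegral R (quadraticAlgebraMap K a b z) :=
    (Algebra.IsIntegral.isIntegral z).map (quadraticAlgebraMap K a b)
  refine le_antisymm ?_ fun w hw ↦ ?_
  · rintro _ ⟨z, rfl⟩
    exact hrange z
  obtain ⟨t, ht⟩ := isInteger_quadraticAlgebra_trace hw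
  obtain ⟨n, hn⟩ := isInteger_quadraticAlgebra_norm hw
  obtain ⟨y, hy⟩ : IsLocalization.IsInteger R w.im := by
    refine isInteger_of_squarefree_mul_sq hd ⟨t ^ 2 - 4 * n, ?_⟩
    simp only [map_sub, map_pow, map_mul, map_add, map_ofNat, ht, hn]
    linear_combination -four_mul_quadraticAlgebra_norm w
  obtain ⟨x, hx⟩ : IsLocalization.IsInteger R w.re := by
    have hre : algebraMap K _ w.re = w - quadraticAlgebraMap K a b ⟨0, y⟩ := by
      simp [quadraticAlgebraMap_mk, QuadraticAlgebra.ext_iff, hy]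
    exact isInteger_of_isIntegral_algebraMap_quadraticAlgebra (hre ▸ hw.sub (hrange _))
  exact ⟨⟨x, y⟩, by simp [quadraticAlgebraMap_mk, hx, hy]⟩

end IntegralClosure

lemma nonempty_quadraticAlgebra_algEquiv_of_isSplittingField {F L : Type*} [Field F]
    [NeZero (2 : F)] [Field L] [Algebra F L] {a b d : F} (hd : b ^ 2 + 4 * a = d)
    (hns : ¬IsSquare d) [IsSplittingField F L (X ^ 2 - C d)] :
    Nonempty (QuadraticAlgebra F a b ≃ₐ[F] L) := by
  have : Fact (∀ r, r ^ 2 ≠ a + b * r) :=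
    ⟨fun r hr ↦ hns ⟨2 * r - b, by linear_combination -4 * hr - hd⟩⟩
  have h2 : (2 : L) ≠ 0 := by
    simpa only [map_ofNat, map_zero] using (algebraMap F L).injective.ne (two_ne_zero (α := F))
  obtain ⟨s, hs⟩ := (IsSplittingField.splits L (X ^ 2 - C d)).exists_eval_eq_zero
    (by rw [degree_map, degree_X_pow_sub_C two_pos]; decide)
  replace hs : s ^ 2 = algebraMap F L d := by simpa [sub_eq_zero] using hs
  let f : QuadraticAlgebra F a b →ₐ[F] L := lift ⟨(algebraMap F L b + s) / 2, by
    simp only [← hd, map_add, map_mul, map_pow, map_ofNat] at hs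
    simp only [Algebra.smul_def, mul_one]
    field_simp
    linear_combination hs⟩
  have hf : f ⟨-b, 2⟩ = s := by
    simp only [f, lift_apply_apply, Algebra.smul_def, map_neg, map_ofNat]
    field_simp
    ring
  refine ⟨.ofBijective f ⟨f.toRingHom.injective, ?_⟩⟩
  rw [← AlgHom.range_eq_top, eq_top_iff, ← IsSplittingField.adjoin_rootSet L (X ^ 2 - C d),
    Algebra.adjoin_le_iff]
  intro r hr
  have hrs : r ^ 2 = s ^ 2 := by
    rw [hs]
    simpa [sub_eq_zero] using (mem_rootSet.1 hr).2
  obtain rfl | rfl := sq_eq_sq_iff_eq_or_eq_neg.1 hrs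
  · exact ⟨_, hf⟩
  · exact neg_mem ⟨_, hf⟩

end QuadraticAlgebra

section NumberField

open Module QuadraticAlgebra

variable {K : Type*} [Field K] [NumberField K] {a b : ℤ}

lemma nonempty_quadraticAlgebra_algEquiv_ringOfIntegers {d : ℤ} (hd : b ^ 2 + 4 * a = d)
    (hsf : Squarefree d) (hns : ¬IsSquare d) [IsSplittingField ℚ K (X ^ 2 - C (d : ℚ))] :
    Nonempty (QuadraticAlgebra ℤ a b ≃ₐ[ℤ] 𝓞 K) := by
  obtain ⟨E⟩ : Nonempty (QuadraticAlgebra ℚ (algebraMap ℤ ℚ a) (algebraMap ℤ ℚ b) ≃ₐ[ℚ] K) :=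
    nonempty_quadraticAlgebra_algEquiv_of_isSplittingField (d := (d : ℚ)) (by simp [← hd])
      (by rwa [Rat.isSquare_intCast_iff])
  exact ⟨(AlgEquiv.ofInjective _ (quadraticAlgebraMap_injective ℚ)).trans <|
    (Subalgebra.equivOfEq _ _ (range_quadraticAlgebraMap_eq_integralClosure (hd ▸ hsf))).trans <|
    (E.restrictScalars ℤ).mapIntegralClosure⟩

lemma finrank_eq_two_of_quadraticAlgebra_algEquiv (e : QuadraticAlgebra ℤ a b ≃ₐ[ℤ] 𝓞 K) :
    finrank ℚ K = 2 := by
  rw [← RingOfIntegers.rank, ← e.toLinearEquiv.finrank_eq, finrank_eq_two]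

lemma discr_eq_of_quadraticAlgebra_algEquiv (e : QuadraticAlgebra ℤ a b ≃ₐ[ℤ] 𝓞 K) :
    discr K = b ^ 2 + 4 * a := by
  rw [← discr_eq_discr K ((basis a b).map e.toLinearEquiv), ← discr_quadraticAlgebra_basis]
  exact (Algebra.discr_eq_discr_of_algEquiv (basis a b) e).symm

end NumberField

section RingHomZMod

open Ideal

variable {S : Type*} [CommRing S]

lemma card_ringHom_zmod_of_quadraticAlgebra_algEquiv {a b : ℤ} (e : QuadraticAlgebra ℤ a b ≃ₐ[ℤ] S)
    (n : ℕ) : Nat.card (S →+* ZMod n) = Nat.card {u : ZMod n // u * u = a • 1 + b • u} :=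
  Nat.card_congr <| (RingHom.equivIntAlgHom ..).trans <|
    (AlgEquiv.arrowCongr e.symm .refl).trans QuadraticAlgebra.lift.symm

lemma ringHom_zmod_eq_of_ker_pow_le {p : ℕ} [Fact p.Prime] {f g : S →+* ZMod p} {k : ℕ}
    (h : RingHom.ker f ^ k ≤ RingHom.ker g) : f = g := by
  have hmax : (RingHom.ker f).IsMaximal :=
    RingHom.ker_isMaximal_of_surjective f (ZMod.ringHom_surjective f)
  have hle : RingHom.ker f ≤ RingHom.ker g := (RingHom.ker_isPrime g).le_of_pow_le h
  exact ZMod.ringHom_eq_of_ker_eq f g (hmax.eq_of_le (RingHom.ker_isPrime g).ne_top hle)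

variable [IsDedekindDomain S]

section AbsNorm

variable [Module.Free ℤ S]

lemma absNorm_ker_ringHom_zmod {n : ℕ} (f : S →+* ZMod n) : absNorm (RingHom.ker f) = n := by
  rw [absNorm_apply, Submodule.cardQuot_apply]
  exact (Nat.card_congr (RingHom.quotientKerEquivOfSurjective
    (ZMod.ringHom_surjective f)).toEquiv).trans (Nat.card_zmod n)

lemma exists_ker_ringHom_zmod_eq {p : ℕ} [Fact p.Prime] {I : Ideal S} (hI : absNorm I = p) :
    ∃ f : S →+* ZMod p, RingHom.ker f = I := by
  have hcard : Nat.card (S ⧸ I) = p := by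
    rw [← hI, absNorm_apply, Submodule.cardQuot_apply]
  have : Finite (S ⧸ I) := Nat.finite_of_card_ne_zero (hcard ▸ NeZero.ne p)
  have := Fintype.ofFinite (S ⧸ I)
  let φ : ZMod p ≃+* S ⧸ I :=
    ZMod.ringEquivOfPrime _ Fact.out (by rw [← Nat.card_eq_fintype_card, hcard])
  refine ⟨φ.symm.toRingHom.comp (Ideal.Quotient.mk I), ?_⟩
  rw [RingHom.ker_equiv_comp, Ideal.mk_ker]

variable (S) in
lemma card_ideal_absNorm_eq_prime (p : ℕ) [Fact p.Prime] :
    Nat.card {I : Ideal S // absNorm I = p} = Nat.card (S →+* ZMod p) := by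
  let ker (f : S →+* ZMod p) : {I : Ideal S // absNorm I = p} :=
    ⟨RingHom.ker f, absNorm_ker_ringHom_zmod f⟩
  have hker : Function.Bijective ker := by
    refine ⟨fun f g h ↦ ZMod.ringHom_eq_of_ker_eq f g (congrArg Subtype.val h), fun ⟨I, hI⟩ ↦ ?_⟩
    obtain ⟨f, rfl⟩ := exists_ker_ringHom_zmod_eq hI
    exact ⟨f, rfl⟩
  exact (Nat.card_congr (.ofBijective ker hker)).symm

end AbsNorm

lemma le_four_mul_pow_of_isPrincipal_ker_pow {a b : ℤ} (e : QuadraticAlgebra ℤ a b ≃ₐ[ℤ] S) {p : ℕ}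
    [Fact p.Prime] {f g : S →+* ZMod p} (hfg : f ≠ g) {k : ℕ} (hk : k ≠ 0)
    (h : (RingHom.ker f ^ k).IsPrincipal) : -(b ^ 2 + 4 * a) ≤ 4 * p ^ k := by
  by_contra! hlt
  have : Module.Free ℤ S := .of_equiv e.toLinearEquiv
  have : Module.Finite ℤ S := .equiv e.toLinearEquiv
  obtain ⟨x, hx⟩ := h
  obtain ⟨z, rfl⟩ := e.surjective x
  rw [submodule_span_eq] at hx
  have hnorm : p ^ k = z.norm.natAbs := by
    rw [← algebraNorm_eq_quadraticAlgebra_norm, ← Algebra.norm_eq_of_algEquiv e,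
      ← absNorm_span_singleton, ← hx, map_pow, absNorm_ker_ringHom_zmod]
  have hz : z = (z.re : QuadraticAlgebra ℤ a b) := by
    have hd : b ^ 2 + 4 * a < 0 := neg_pos.1 (hlt.trans_le' (by positivity))
    have hlt' : 4 * z.norm < -(b ^ 2 + 4 * a) := by
      refine hlt.trans_le' ?_
      exact_mod_cast hnorm ▸ mul_le_mul_of_nonneg_left Int.le_natAbs (by norm_num)
    ext <;> simp [im_eq_zero_of_four_mul_norm_lt hd hlt']
  have hre : (p : ℤ) ∣ z.re := by
    rw [hz, QuadraticAlgebra.norm_intCast] at hnorm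
    have hdvd : (p : ℤ) ∣ z.re ^ 2 := Int.natCast_dvd.2 (hnorm ▸ dvd_pow_self p hk)
    exact (Nat.prime_iff_prime_int.1 Fact.out).dvd_of_dvd_pow hdvd
  have hdvd : (p : S) ∣ e z := by
    rw [hz, map_intCast]
    simpa using map_dvd (Int.castRingHom S) hre
  refine hfg (ringHom_zmod_eq_of_ker_pow_le (k := k) ?_)
  rw [hx, span_singleton_le_iff_mem, RingHom.mem_ker]
  exact zero_dvd_iff.1 (by simpa using map_dvd g hdvd)

end RingHomZMod

section ClassGroup

open Ideal Module

variable {K : Type*} [Field K] [NumberField K]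

lemma classNumber_le_sum_card_ideal_absNorm_eq {N : ℕ}
    (hN : (4 / Real.pi) ^ InfinitePlace.nrComplexPlaces K *
      ((finrank ℚ K).factorial / (finrank ℚ K) ^ (finrank ℚ K) * √|discr K|) < N + 1) :
    classNumber K ≤ ∑ n ∈ Finset.Icc 1 N, Nat.card {I : Ideal (𝓞 K) // absNorm I = n} := by
  let s := (n : Finset.Icc 1 N) × {I : Ideal (𝓞 K) // absNorm I = n}
  have (n : ℕ) : Finite {I : Ideal (𝓞 K) // absNorm I = n} := finite_setOfPred_absNorm_eq n
  have hmem (x : s) : x.2.1 ∈ nonZeroDivisors (Ideal (𝓞 K)) := by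
    rw [← absNorm_ne_zero_iff_mem_nonZeroDivisors, x.2.2]
    exact Nat.one_le_iff_ne_zero.1 (Finset.mem_Icc.1 x.1.2).1
  let f (x : s) : ClassGroup (𝓞 K) := ClassGroup.mk0 ⟨_, hmem x⟩
  have hf : Function.Surjective f := by
    intro C
    obtain ⟨I, rfl, hI⟩ := exists_ideal_in_class_of_norm_le C
    have hlt : absNorm I.1 < N + 1 := by exact_mod_cast hI.trans_lt hN
    have hpos : 0 < absNorm I.1 := absNorm_pos_of_nonZeroDivisors I
    exact ⟨⟨⟨absNorm I.1, Finset.mem_Icc.2 (by lia)⟩, I.1, rfl⟩, rfl⟩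
  calc classNumber K = Nat.card (ClassGroup (𝓞 K)) := Nat.card_eq_fintype_card.symm
    _ ≤ Nat.card s := Nat.card_le_card_of_surjective f hf
    _ = ∑ n ∈ Finset.Icc 1 N, Nat.card {I : Ideal (𝓞 K) // absNorm I = n} :=
      Nat.card_sigma.trans <|
        Finset.sum_coe_sort _ fun n ↦ Nat.card {I : Ideal (𝓞 K) // absNorm I = n}

lemma nrComplexPlaces_eq_one_of_discr_neg (h2 : finrank ℚ K = 2) (hd : discr K < 0) :
    InfinitePlace.nrComplexPlaces K = 1 := by
  have hsum := InfinitePlace.card_add_two_mul_card_eq_rank K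
  have hsign := sign_discr K
  rw [Int.sign_eq_neg_one_of_neg hd] at hsign
  have hne : InfinitePlace.nrComplexPlaces K ≠ 0 := fun h ↦ by simp [h] at hsign
  lia

lemma classNumber_le_sum_card_ideal_absNorm_eq_of_discr_neg (h2 : finrank ℚ K = 2)
    (hd : discr K < 0) {N : ℕ} (hN : 2 * √|discr K| < Real.pi * (N + 1)) :
    classNumber K ≤ ∑ n ∈ Finset.Icc 1 N, Nat.card {I : Ideal (𝓞 K) // absNorm I = n} := by
  apply classNumber_le_sum_card_ideal_absNorm_eq
  rw [nrComplexPlaces_eq_one_of_discr_neg h2 hd, h2]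
  calc (4 / Real.pi) ^ 1 * ((Nat.factorial 2 : ℕ) / (2 : ℕ) ^ 2 * √|discr K|)
      = 2 * √|discr K| / Real.pi := by norm_num [Nat.factorial]; ring
    _ < N + 1 := (div_lt_iff₀' Real.pi_pos).2 hN

lemma exists_le_four_mul_pow_orderOf {a b : ℤ} (e : QuadraticAlgebra ℤ a b ≃ₐ[ℤ] 𝓞 K) {p : ℕ}
    [Fact p.Prime] {f g : 𝓞 K →+* ZMod p} (hfg : f ≠ g) :
    ∃ C : ClassGroup (𝓞 K), -(b ^ 2 + 4 * a) ≤ 4 * p ^ orderOf C := by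
  have hmem : RingHom.ker f ∈ nonZeroDivisors (Ideal (𝓞 K)) := by
    rw [← absNorm_ne_zero_iff_mem_nonZeroDivisors, absNorm_ker_ringHom_zmod]
    exact NeZero.ne p
  refine ⟨ClassGroup.mk0 ⟨_, hmem⟩,
    le_four_mul_pow_of_isPrincipal_ker_pow e hfg (orderOf_pos _).ne' ?_⟩
  have hpow := pow_orderOf_eq_one (ClassGroup.mk0 ⟨_, hmem⟩)
  rwa [← map_pow, ClassGroup.mk0_eq_one_iff] at hpow

lemma classNumber_le_one_add_card_ringHom_zmod (h2 : finrank ℚ K = 2) (hd : discr K < 0)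
    (hd' : -39 ≤ discr K) :
    classNumber K ≤ 1 + Nat.card (𝓞 K →+* ZMod 2) + Nat.card (𝓞 K →+* ZMod 3) := by
  have hsqrt : √(|discr K| : ℝ) < 6.25 := by
    have habs : (|discr K| : ℝ) ≤ 39 := by
      exact_mod_cast abs_le.2 ⟨hd', by lia⟩
    exact (Real.sqrt_lt' (by norm_num)).2 (habs.trans_lt (by norm_num))
  have hN : 2 * √|discr K| < Real.pi * ((3 : ℕ) + 1) := by
    push_cast
    linarith [Real.pi_gt_d2]
  refine (classNumber_le_sum_card_ideal_absNorm_eq_of_discr_neg h2 hd hN).trans_eq ?_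
  simp [Finset.sum_Icc_succ_top, card_ideal_absNorm_eq_prime]

end ClassGroup

/-- The class group of `ℚ(√-39)` is cyclic of order 4. -/
theorem classGroup_sqrt_neg39 (K : Type*) [Field K] [NumberField K]
    [IsSplittingField ℚ K (X ^ 2 + 39)] :
    IsCyclic (ClassGroup (𝓞 K)) ∧ NumberField.classNumber K = 4 := by
  have hX : (X ^ 2 + 39 : ℚ[X]) = X ^ 2 - C ((-39 : ℤ) : ℚ) := by simp [map_ofNat C 39]
  have : IsSplittingField ℚ K (X ^ 2 - C ((-39 : ℤ) : ℚ)) := hX ▸ ‹_›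
  obtain ⟨e⟩ : Nonempty (QuadraticAlgebra ℤ (-10) 1 ≃ₐ[ℤ] 𝓞 K) :=
    nonempty_quadraticAlgebra_algEquiv_ringOfIntegers (d := -39) (by norm_num)
      (Int.squarefree_natAbs.1 (by decide +kernel)) (by decide)
  have hcard2 : Nat.card (𝓞 K →+* ZMod 2) = 2 := by
    rw [card_ringHom_zmod_of_quadraticAlgebra_algEquiv e, Nat.card_eq_fintype_card]; decide
  have hcard3 : Nat.card (𝓞 K →+* ZMod 3) = 1 := by
    rw [card_ringHom_zmod_of_quadraticAlgebra_algEquiv e, Nat.card_eq_fintype_card]; decide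
  have hd : discr K = -39 := discr_eq_of_quadraticAlgebra_algEquiv e
  have hle := classNumber_le_one_add_card_ringHom_zmod
    (finrank_eq_two_of_quadraticAlgebra_algEquiv e) (by lia) hd.ge
  obtain ⟨f, g, hfg, -⟩ := Nat.card_eq_two_iff.1 hcard2
  obtain ⟨c, hc⟩ := exists_le_four_mul_pow_orderOf e hfg
  have hfour : 4 ≤ orderOf c := by
    by_contra! h
    interval_cases orderOf c <;> simp at hc
  have horder : orderOf c ≤ Nat.card (ClassGroup (𝓞 K)) := orderOf_le_card
  rw [classNumber, ← Nat.card_eq_fintype_card] at hle ⊢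
  exact ⟨isCyclic_of_orderOf_eq_card c (by lia), by lia⟩
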